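/- arXiv:2509.25209 — 3 statements merged into one kernel-verified Lean document; each statement's English description precedes it below -/
import Mathlib

section
/- For the quantity of interest Γ(f) = max[f] = max_{x∈X} f(x), the recovery map Δ̃ : ℝ^M → ℝ defined by Δ̃(y) = max_{1≤m≤M} y_m + (1/2) max_{x∈X} u_{0,ε}(x) − (1/2) max_{1≤m≤M} ε_m satisfies gwce_ε(Δ̃) ≤ (1/2) max_{x∈X} u_{0,ε}(x) + (1/2) max_{1≤m≤M} ε_m, where u_{0,ε}(x) = min_{1≤m≤M}(ε_m + dist(x,x⁽ᵐ⁾)^α). -/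
open scoped ENNReal

/-!
Data `y` with accuracies `ε` confine the unknown maximum to an interval: reading `f` at the
datasites gives `max y - max ε ≤ max f`, and extrapolating from the datasites gives `f ≤ max y + u`
pointwise, where `u = u_{0,ε}`, so `max f ≤ max y + max u`. The recovery map returns the midpoint of
this interval, so its error is at most half the length, `(max u + max ε) / 2`.
-/

/-- The model class of functions whose increments are controlled by `ω`. The Hölder class `H_α` is
the case `ω x z = dist x z ^ α`. -/
def modulusClass {X : Type*} (ω : X → X → ℝ) : Set (X → ℝ) :=
  {f | ∀ x z, |f x - f z| ≤ ω x z}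

/-- Observations `y` of `f` at the datasites `xs` that are correct up to the accuracies `ε`. -/
def IsConsistentData {X ι : Type*} (xs : ι → X) (ε : ι → ℝ) (f : X → ℝ) (y : ι → ℝ) : Prop :=
  ∀ m, |y m - f (xs m)| ≤ ε m

/-- The global worst-case error of the recovery map `Δ` for the quantity of interest `Γ` over the
model class `H`. It takes values in `ℝ≥0∞` so that an unbounded error is `∞`, not a junk value. -/
noncomputable def globalWorstCaseError {X ι : Type*} (H : Set (X → ℝ)) (Γ : (X → ℝ) → ℝ)
    (xs : ι → X) (ε : ι → ℝ) (Δ : (ι → ℝ) → ℝ) : ℝ≥0∞ :=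
  ⨆ (f : X → ℝ) (_ : f ∈ H) (y : ι → ℝ) (_ : IsConsistentData xs ε f y),
    ENNReal.ofReal |Γ f - Δ y|

/-- The function `u_{0,ε}`: the best upper bound at `x` obtained by extrapolating data equal to
`0` with accuracies `ε` from single datasites. -/
noncomputable def upperEnvelope {X ι : Type*} (ω : X → X → ℝ) (xs : ι → X) (ε : ι → ℝ)
    (x : X) : ℝ :=
  ⨅ m, (ε m + ω x (xs m))

section

variable {X ι : Type*} {ω : X → X → ℝ} {xs : ι → X} {ε y : ι → ℝ} {f : X → ℝ}

theorem globalWorstCaseError_le_ofReal {H : Set (X → ℝ)} {Γ : (X → ℝ) → ℝ}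
    {Δ : (ι → ℝ) → ℝ} {C : ℝ}
    (h : ∀ f ∈ H, ∀ y, IsConsistentData xs ε f y → |Γ f - Δ y| ≤ C) :
    globalWorstCaseError H Γ xs ε Δ ≤ ENNReal.ofReal C :=
  iSup₂_le fun f hf => iSup₂_le fun y hy => ENNReal.ofReal_le_ofReal (h f hf y hy)

theorem bddAbove_range_of_mem_modulusClass {x₀ : X} (hf : f ∈ modulusClass ω)
    (hω : BddAbove (Set.range fun x => ω x x₀)) : BddAbove (Set.range f) := by
  obtain ⟨C, hC⟩ := hω
  refine ⟨f x₀ + C, Set.forall_mem_range.2 fun x => ?_⟩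
  have hinc : f x - f x₀ ≤ ω x x₀ := (abs_le.1 (hf x x₀)).2
  have hωC : ω x x₀ ≤ C := hC ⟨x, rfl⟩
  linarith

theorem IsConsistentData.le_iSup_add_iSup (hy : IsConsistentData xs ε f y)
    (hf : BddAbove (Set.range f)) (hε : BddAbove (Set.range ε)) (m : ι) :
    y m ≤ (⨆ x, f x) + ⨆ m, ε m := by
  have hym : y m - f (xs m) ≤ ε m := (abs_le.1 (hy m)).2
  linarith [le_ciSup hf (xs m), le_ciSup hε m]

theorem IsConsistentData.bddAbove_range (hy : IsConsistentData xs ε f y)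
    (hf : BddAbove (Set.range f)) (hε : BddAbove (Set.range ε)) : BddAbove (Set.range y) :=
  ⟨_, Set.forall_mem_range.2 (hy.le_iSup_add_iSup hf hε)⟩

theorem IsConsistentData.sub_iSup_le_add (hy : IsConsistentData xs ε f y) (hf : f ∈ modulusClass ω)
    (hyb : BddAbove (Set.range y)) (x : X) (m : ι) :
    f x - ⨆ m, y m ≤ ε m + ω x (xs m) := by
  have hinc : f x - f (xs m) ≤ ω x (xs m) := (abs_le.1 (hf x (xs m))).2
  have hym : -ε m ≤ y m - f (xs m) := (abs_le.1 (hy m)).1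
  linarith [le_ciSup hyb m]

theorem IsConsistentData.bddAbove_range_upperEnvelope (hy : IsConsistentData xs ε f y)
    (hf : f ∈ modulusClass ω) (hyb : BddAbove (Set.range y)) {m₀ : ι}
    (hω : BddAbove (Set.range fun x => ω x (xs m₀))) :
    BddAbove (Set.range (upperEnvelope ω xs ε)) := by
  obtain ⟨C, hC⟩ := hω
  refine ⟨ε m₀ + C, Set.forall_mem_range.2 fun x => ?_⟩
  have hbelow : BddBelow (Set.range fun m => ε m + ω x (xs m)) :=
    ⟨_, Set.forall_mem_range.2 (hy.sub_iSup_le_add hf hyb x)⟩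
  calc upperEnvelope ω xs ε x ≤ ε m₀ + ω x (xs m₀) := ciInf_le hbelow m₀
    _ ≤ ε m₀ + C := by gcongr; exact hC ⟨x, rfl⟩

theorem IsConsistentData.iSup_le_iSup_add_iSup_upperEnvelope [Nonempty X] [Nonempty ι]
    (hy : IsConsistentData xs ε f y) (hf : f ∈ modulusClass ω) (hyb : BddAbove (Set.range y))
    (hu : BddAbove (Set.range (upperEnvelope ω xs ε))) :
    ⨆ x, f x ≤ (⨆ m, y m) + ⨆ x, upperEnvelope ω xs ε x := by
  refine ciSup_le fun x => ?_
  have hx : f x - ⨆ m, y m ≤ upperEnvelope ω xs ε x := le_ciInf (hy.sub_iSup_le_add hf hyb x)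
  linarith [le_ciSup hu x]

theorem stmt11_general {m₀ : ι} (hω : BddAbove (Set.range fun x => ω x (xs m₀)))
    (hε : BddAbove (Set.range ε)) :
    globalWorstCaseError (modulusClass ω) (fun f => ⨆ x, f x) xs ε
        (fun y => (⨆ m, y m) + (1 / 2) * (⨆ x, upperEnvelope ω xs ε x) - (1 / 2) * ⨆ m, ε m) ≤
      ENNReal.ofReal ((1 / 2) * (⨆ x, upperEnvelope ω xs ε x) + (1 / 2) * ⨆ m, ε m) := by
  have : Nonempty ι := ⟨m₀⟩
  have : Nonempty X := ⟨xs m₀⟩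
  refine globalWorstCaseError_le_ofReal fun f hf y hy => ?_
  have hfb := bddAbove_range_of_mem_modulusClass hf hω
  have hyb := hy.bddAbove_range hfb hε
  have lower : ⨆ m, y m ≤ (⨆ x, f x) + ⨆ m, ε m := ciSup_le (hy.le_iSup_add_iSup hfb hε)
  have upper : ⨆ x, f x ≤ (⨆ m, y m) + ⨆ x, upperEnvelope ω xs ε x :=
    hy.iSup_le_iSup_add_iSup_upperEnvelope hf hyb (hy.bddAbove_range_upperEnvelope hf hyb hω)
  exact abs_le.2 ⟨by linarith, by linarith⟩

end

/-- For the quantity of interest `max[f]`, the recovery map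
`Δ̃(y) = max_m y_m + (1/2) max_x u_{0,ε}(x) - (1/2) max_m ε_m` has global worst-case error at
most `(1/2) max_x u_{0,ε}(x) + (1/2) max_m ε_m`. -/
theorem stmt11 {X : Type*} [MetricSpace X] [CompactSpace X] [Nonempty X]
    (α : ℝ) (hα : 0 < α) (hα1 : α ≤ 1)
    (M : ℕ) (hM : 0 < M) (xs : Fin M → X) (ε : Fin M → ℝ) (hε : ∀ m, 0 ≤ ε m)
    (gwce : ((Fin M → ℝ) → ℝ) → ℝ≥0∞)
    (hgwce : ∀ Δ : (Fin M → ℝ) → ℝ, gwce Δ =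
      ⨆ (f : X → ℝ) (_ : ∀ x x' : X, |f x - f x'| ≤ dist x x' ^ α)
        (y : Fin M → ℝ) (_ : ∀ m, |y m - f (xs m)| ≤ ε m),
        ENNReal.ofReal |(⨆ x : X, f x) - Δ y|) :
    gwce (fun y => (⨆ m : Fin M, y m) +
        (1 / 2) * (⨆ x : X, ⨅ m : Fin M, (ε m + dist x (xs m) ^ α)) -
        (1 / 2) * ⨆ m : Fin M, ε m) ≤
      ENNReal.ofReal ((1 / 2) * (⨆ x : X, ⨅ m : Fin M, (ε m + dist x (xs m) ^ α)) +
        (1 / 2) * ⨆ m : Fin M, ε m) := by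
  have hdist : Continuous fun x => dist x (xs ⟨0, hM⟩) ^ α :=
    (continuous_id.dist continuous_const).rpow_const fun _ => Or.inr hα.le
  exact (hgwce _).trans_le <| stmt11_general (ω := fun x z => dist x z ^ α)
    (isCompact_range hdist).bddAbove (Set.finite_range ε).bddAbove
end

section
/- Suppose ε_m = ε ≥ 0 for all m ∈ {1,…,M}. For the quantity of interest Γ(f) = max[f] = max_{x∈X} f(x), the minimal global worst-case error over all recovery maps Δ : ℝ^M → ℝ equals (1/2) max_{x∈X} U(x) + ε, where U(x) = min_{1≤m≤M} dist(x,x⁽ᵐ⁾)^α; moreover this minimum is achieved by the map Δ^glo(y) = max_{1≤m≤M} y_m + (1/2) max_{x∈X} U(x), i.e., gwce_ε(Δ^glo) = (1/2) max_{x∈X} U(x) + ε ≤ gwce_ε(Δ) for every Δ : ℝ^M → ℝ. -/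
open scoped ENNReal

/-!
Writing `U x = min_m dist x x⁽ᵐ⁾ ^ α`, noisy data `y` confine the maximum of `f ∈ H_α` to the
interval `[max y - ε, max y + ε + max U]`, of which `Δ^glo y` is the midpoint; its half-length
`(1/2) max U + ε` therefore bounds the error of `Δ^glo`. For the data `y = 0` both endpoints are
attained, by the functions `-ε` and `U + ε` of `H_α`, so no recovery map has a smaller error.
That `U` lies in `H_α` is the fact that the distance to a set is `1`-Lipschitz, applied to the
snowflake metric `dist ^ α`.
-/

section OptimalRecovery

variable {F Y Z : Type*} [PseudoEMetricSpace Z]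

/-- The global worst-case error of a recovery map `Δ` for the quantity of interest `Γ` over the
model class `K`, where `obs f` is the set of data that may be observed for `f`. -/
noncomputable def worstCaseError (K : Set F) (obs : F → Set Y) (Γ : F → Z) (Δ : Y → Z) : ℝ≥0∞ :=
  ⨆ (f ∈ K) (y ∈ obs f), edist (Γ f) (Δ y)

variable {K : Set F} {obs : F → Set Y} {Γ : F → Z} {f g : F} {y : Y}

theorem edist_le_worstCaseError (Δ : Y → Z) (hf : f ∈ K) (hy : y ∈ obs f) :
    edist (Γ f) (Δ y) ≤ worstCaseError K obs Γ Δ :=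
  le_iSup₂_of_le f hf <| le_iSup₂_of_le y hy le_rfl

theorem edist_div_two_le_worstCaseError (Δ : Y → Z) (hf : f ∈ K) (hyf : y ∈ obs f)
    (hg : g ∈ K) (hyg : y ∈ obs g) : edist (Γ f) (Γ g) / 2 ≤ worstCaseError K obs Γ Δ := by
  refine ENNReal.div_le_of_le_mul ?_
  calc edist (Γ f) (Γ g) ≤ edist (Γ f) (Δ y) + edist (Γ g) (Δ y) := edist_triangle_right ..
    _ ≤ worstCaseError K obs Γ Δ + worstCaseError K obs Γ Δ :=
      add_le_add (edist_le_worstCaseError Δ hf hyf) (edist_le_worstCaseError Δ hg hyg)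
    _ = worstCaseError K obs Γ Δ * 2 := (mul_two _).symm

end OptimalRecovery

section HolderClass

variable {X : Type*} [PseudoMetricSpace X] {α : ℝ} {f : X → ℝ}

/-- The model class `H_α` of real functions that are `α`-Hölder with constant `1`. -/
def holderClass (X : Type*) [PseudoMetricSpace X] (α : ℝ) : Set (X → ℝ) :=
  {f | ∀ x x' : X, |f x - f x'| ≤ dist x x' ^ α}

theorem const_mem_holderClass (c : ℝ) : (fun _ => c) ∈ holderClass X α := fun x x' => by
  simpa only [sub_self, abs_zero] using Real.rpow_nonneg dist_nonneg α

theorem add_const_mem_holderClass (hf : f ∈ holderClass X α) (c : ℝ) :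
    (fun x => f x + c) ∈ holderClass X α := fun x x' => by
  simpa only [add_sub_add_right_eq_sub] using hf x x'

theorem le_add_rpow_dist_of_mem_holderClass (hf : f ∈ holderClass X α) (x x' : X) :
    f x ≤ f x' + dist x x' ^ α := by
  linarith [le_of_abs_le (hf x x')]

theorem rpow_dist_le_rpow_diam_univ [BoundedSpace X] (hα : 0 ≤ α) (x x' : X) :
    dist x x' ^ α ≤ Metric.diam (Set.univ : Set X) ^ α :=
  Real.rpow_le_rpow dist_nonneg
    (Metric.dist_le_diam_of_mem (.all _) (Set.mem_univ _) (Set.mem_univ _)) hα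

theorem bddAbove_range_of_mem_holderClass [BoundedSpace X] (hα : 0 ≤ α)
    (hf : f ∈ holderClass X α) : BddAbove (Set.range f) := by
  rcases isEmpty_or_nonempty X with _ | ⟨⟨x₀⟩⟩
  · simp only [Set.range_eq_empty, bddAbove_empty]
  · refine ⟨f x₀ + Metric.diam (Set.univ : Set X) ^ α, ?_⟩
    rintro _ ⟨x, rfl⟩
    linarith [le_add_rpow_dist_of_mem_holderClass hf x x₀, rpow_dist_le_rpow_diam_univ hα x x₀]

end HolderClass

section RpowInfDist

open Metric Metric.Snowflaking

variable {ι X : Type*} [PseudoMetricSpace X] {α : ℝ} {xs : ι → X}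

/-- The function `U`: the `α`-th power of the distance to the nearest datasite `xs i`. -/
noncomputable def rpowInfDist (α : ℝ) (xs : ι → X) (x : X) : ℝ :=
  ⨅ i, dist x (xs i) ^ α

theorem rpowInfDist_le (x : X) (i : ι) : rpowInfDist α xs x ≤ dist x (xs i) ^ α :=
  ciInf_le ⟨0, Set.forall_mem_range.2 fun _ => Real.rpow_nonneg dist_nonneg α⟩ i

theorem rpowInfDist_nonneg (x : X) : 0 ≤ rpowInfDist α xs x :=
  Real.iInf_nonneg fun _ => Real.rpow_nonneg dist_nonneg α

theorem rpowInfDist_apply_self (hα : α ≠ 0) (i : ι) : rpowInfDist α xs (xs i) = 0 := by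
  refine le_antisymm ?_ (rpowInfDist_nonneg _)
  simpa only [dist_self, Real.zero_rpow hα] using rpowInfDist_le (α := α) (xs := xs) (xs i) i

theorem rpowInfDist_eq_infDist_toSnowflaking (hα : 0 < α) (hα1 : α ≤ 1) (x : X) :
    rpowInfDist α xs x = infDist (toSnowflaking x : Snowflaking X α hα hα1)
      (Set.range fun i => toSnowflaking (xs i)) := by
  rw [infDist_eq_iInf, iInf_range' (fun z => dist (toSnowflaking x) z)]
  rfl

theorem rpowInfDist_mem_holderClass (hα : 0 < α) (hα1 : α ≤ 1) :
    rpowInfDist α xs ∈ holderClass X α := fun x x' => by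
  have lipschitz : LipschitzWith 1 fun z : Snowflaking X α hα hα1 =>
      infDist z (Set.range fun i => toSnowflaking (xs i)) := lipschitz_infDist_pt _
  simp only [rpowInfDist_eq_infDist_toSnowflaking hα hα1]
  exact (lipschitz.dist_le_mul (toSnowflaking x) (toSnowflaking x')).trans_eq (one_mul _)

theorem bddAbove_range_rpowInfDist [Nonempty ι] [BoundedSpace X] (hα : 0 ≤ α) :
    BddAbove (Set.range (rpowInfDist α xs)) :=
  ⟨diam (Set.univ : Set X) ^ α, Set.forall_mem_range.2 fun x =>
    (rpowInfDist_le x (Classical.arbitrary ι)).trans (rpow_dist_le_rpow_diam_univ hα _ _)⟩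

end RpowInfDist

section NoisyData

variable {ι X : Type*} {xs : ι → X} {ε : ℝ} {f : X → ℝ} {y : ι → ℝ}

/-- The data vectors compatible with `f` up to accuracy `ε` at every datasite `xs i`. -/
def noisyData (xs : ι → X) (ε : ℝ) (f : X → ℝ) : Set (ι → ℝ) :=
  {y | ∀ i, |y i - f (xs i)| ≤ ε}

theorem le_iSup_add_of_mem_noisyData (hf : BddAbove (Set.range f)) (hy : y ∈ noisyData xs ε f)
    (i : ι) : y i ≤ (⨆ x, f x) + ε := by
  linarith [le_of_abs_le (hy i), le_ciSup hf (xs i)]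

theorem le_iSup_data_add_rpowInfDist [PseudoMetricSpace X] [Nonempty ι] {α : ℝ}
    (hf : f ∈ holderClass X α) (hy : y ∈ noisyData xs ε f) (hy_bdd : BddAbove (Set.range y))
    (x : X) : f x ≤ (⨆ i, y i) + ε + rpowInfDist α xs x := by
  suffices f x - (⨆ i, y i) - ε ≤ rpowInfDist α xs x by linarith
  refine le_ciInf fun i => ?_
  linarith [le_add_rpow_dist_of_mem_holderClass hf x (xs i), neg_le_of_abs_le (hy i),
    le_ciSup hy_bdd i]

theorem abs_iSup_sub_midpoint_le [PseudoMetricSpace X] [BoundedSpace X] [Nonempty ι] {α : ℝ}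
    (hα : 0 ≤ α) (hf : f ∈ holderClass X α) (hy : y ∈ noisyData xs ε f) :
    |(⨆ x, f x) - ((⨆ i, y i) + 1 / 2 * ⨆ x, rpowInfDist α xs x)| ≤
      1 / 2 * (⨆ x, rpowInfDist α xs x) + ε := by
  have : Nonempty X := .map xs ‹_›
  have data_le := le_iSup_add_of_mem_noisyData (bddAbove_range_of_mem_holderClass hα hf) hy
  have lower : (⨆ i, y i) ≤ (⨆ x, f x) + ε := ciSup_le data_le
  have upper : (⨆ x, f x) ≤ (⨆ i, y i) + ε + ⨆ x, rpowInfDist α xs x := ciSup_le fun x =>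
    (le_iSup_data_add_rpowInfDist hf hy ⟨_, Set.forall_mem_range.2 data_le⟩ x).trans <|
      add_le_add_right (le_ciSup (bddAbove_range_rpowInfDist hα) x) _
  rw [abs_le]
  constructor <;> linarith

end NoisyData

section MaxRecovery

variable {ι X : Type*} [PseudoMetricSpace X] [BoundedSpace X] [Nonempty ι] {α ε : ℝ}

theorem worstCaseError_iSup_midpoint_le (hα : 0 ≤ α) (xs : ι → X) (ε : ℝ) :
    worstCaseError (holderClass X α) (noisyData xs ε) (fun f => ⨆ x, f x)
        (fun y => (⨆ i, y i) + 1 / 2 * ⨆ x, rpowInfDist α xs x) ≤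
      ENNReal.ofReal (1 / 2 * (⨆ x, rpowInfDist α xs x) + ε) := by
  refine iSup₂_le fun f hf => iSup₂_le fun y hy => ?_
  rw [edist_dist, Real.dist_eq]
  exact ENNReal.ofReal_le_ofReal (abs_iSup_sub_midpoint_le hα hf hy)

theorem le_worstCaseError_iSup (hα : 0 < α) (hα1 : α ≤ 1) (xs : ι → X) (hε : 0 ≤ ε)
    (Δ : (ι → ℝ) → ℝ) :
    ENNReal.ofReal (1 / 2 * (⨆ x, rpowInfDist α xs x) + ε) ≤
      worstCaseError (holderClass X α) (noisyData xs ε) (fun f => ⨆ x, f x) Δ := by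
  have : Nonempty X := .map xs ‹_›
  have data_upper : (0 : ι → ℝ) ∈ noisyData xs ε fun x => rpowInfDist α xs x + ε := fun i => by
    simp only [Pi.zero_apply, rpowInfDist_apply_self hα.ne', zero_add, zero_sub, abs_neg,
      abs_of_nonneg hε, le_refl]
  have data_lower : (0 : ι → ℝ) ∈ noisyData xs ε fun _ => -ε := fun i => by
    simp only [Pi.zero_apply, sub_neg_eq_add, zero_add, abs_of_nonneg hε, le_refl]
  have half_gap : ENNReal.ofReal (1 / 2 * (⨆ x, rpowInfDist α xs x) + ε) =
      edist (⨆ x, (rpowInfDist α xs x + ε)) (⨆ _ : X, -ε) / 2 := by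
    have iSup_nonneg : 0 ≤ ⨆ x, rpowInfDist α xs x := Real.iSup_nonneg rpowInfDist_nonneg
    rw [← ciSup_add (bddAbove_range_rpowInfDist hα.le), ciSup_const, edist_dist, Real.dist_eq,
      abs_of_nonneg (by linarith), ← ENNReal.ofReal_ofNat 2, ← ENNReal.ofReal_div_of_pos two_pos]
    congr 1
    ring
  rw [half_gap]
  exact edist_div_two_le_worstCaseError Δ
    (add_const_mem_holderClass (rpowInfDist_mem_holderClass hα hα1) ε) data_upper
    (const_mem_holderClass (-ε)) data_lower

theorem stmt13_general (hα : 0 < α) (hα1 : α ≤ 1) (xs : ι → X) (hε : 0 ≤ ε) :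
    worstCaseError (holderClass X α) (noisyData xs ε) (fun f => ⨆ x, f x)
        (fun y => (⨆ i, y i) + 1 / 2 * ⨆ x, rpowInfDist α xs x) =
      ENNReal.ofReal (1 / 2 * (⨆ x, rpowInfDist α xs x) + ε) ∧
    ∀ Δ : (ι → ℝ) → ℝ, ENNReal.ofReal (1 / 2 * (⨆ x, rpowInfDist α xs x) + ε) ≤
      worstCaseError (holderClass X α) (noisyData xs ε) (fun f => ⨆ x, f x) Δ :=
  ⟨le_antisymm (worstCaseError_iSup_midpoint_le hα.le xs ε)
    (le_worstCaseError_iSup hα hα1 xs hε _), le_worstCaseError_iSup hα hα1 xs hε⟩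

end MaxRecovery

/-- With a common accuracy `ε`, for the quantity of interest `max[f]` the minimal
global worst-case error over all recovery maps equals `(1/2) max_x U(x) + ε`, where
`U(x) = min_m dist(x, x⁽ᵐ⁾)^α`, and it is achieved by
`Δ^glo(y) = max_m y_m + (1/2) max_x U(x)`. -/
theorem stmt13 {X : Type*} [MetricSpace X] [CompactSpace X] [Nonempty X]
    (α : ℝ) (hα : 0 < α) (hα1 : α ≤ 1)
    (M : ℕ) (hM : 0 < M) (xs : Fin M → X) (ε : ℝ) (hε : 0 ≤ ε)
    (gwce : ((Fin M → ℝ) → ℝ) → ℝ≥0∞)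
    (hgwce : ∀ Δ : (Fin M → ℝ) → ℝ, gwce Δ =
      ⨆ (f : X → ℝ) (_ : ∀ x x' : X, |f x - f x'| ≤ dist x x' ^ α)
        (y : Fin M → ℝ) (_ : ∀ m, |y m - f (xs m)| ≤ ε),
        ENNReal.ofReal |(⨆ x : X, f x) - Δ y|) :
    gwce (fun y => (⨆ m : Fin M, y m) +
        (1 / 2) * ⨆ x : X, ⨅ m : Fin M, dist x (xs m) ^ α) =
      ENNReal.ofReal ((1 / 2) * (⨆ x : X, ⨅ m : Fin M, dist x (xs m) ^ α) + ε) ∧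
    ∀ Δ : (Fin M → ℝ) → ℝ,
      ENNReal.ofReal ((1 / 2) * (⨆ x : X, ⨅ m : Fin M, dist x (xs m) ^ α) + ε) ≤ gwce Δ := by
  have : Nonempty (Fin M) := ⟨⟨0, hM⟩⟩
  simpa only [hgwce, worstCaseError, edist_dist, Real.dist_eq, holderClass, noisyData, rpowInfDist,
    Set.mem_ofPred_eq] using stmt13_general hα hα1 xs hε
end

section
/- Equip ℝ^d with the ℓ∞-norm, so X = [−1,1]^d with normalized Lebesgue measure μ (μ(X) = 1), let α ∈ (0,1] and p ∈ [1,∞). Then for any datasites x⁽¹⁾,…,x⁽ᴹ⁾ ∈ X, ( ∫_X ( min_{1≤m≤M} ‖x − x⁽ᵐ⁾‖_∞^α )^p dμ(x) )^{1/p} ≥ ( d/(d + αp) )^{1/p} · M^{−α/d}, and when M = N^d for an integer N ≥ 1 equality holds for the centers of the N^d congruent subcubes of side 2/N partitioning [−1,1]^d. -/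
open MeasureTheory

/-!
Put `q = αp` and `n = dim E`. If the `M` balls of radius `r` about the sites have total volume at
most that of `X`, then pointwise `dist(x, sites)^q ≥ r^q - ∑ₘ (r^q - ‖x - x⁽ᵐ⁾‖^q)₊`, because the
summand of the nearest site alone already accounts for the difference. Each bump on the right has
integral `q / (n + q) * r^q * μ(ball r)` over the whole space, so averaging over `X` leaves at least
`r^q (1 - q / (n + q)) = n / (n + q) * r^q`. Both inequalities are equalities when the balls tile
`X`, which for the sup norm happens at the centers of a cubical grid.
-/

open Metric Module ProbabilityTheory Set
open scoped Function

section PowBump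

/-- The truncated power `(r ^ q - t ^ q)₊`; composed with the norm it is a radial bump supported on
the closed ball of radius `r`, measuring by how much `‖x‖ ^ q` falls short of `r ^ q`. -/
noncomputable def powBump (q r t : ℝ) : ℝ := max (r ^ q - t ^ q) 0

variable {q r t : ℝ}

lemma powBump_nonneg : 0 ≤ powBump q r t := le_max_right _ _

lemma powBump_eq_sub (hq : 0 ≤ q) (ht : 0 ≤ t) (htr : t ≤ r) : powBump q r t = r ^ q - t ^ q :=
  max_eq_left (sub_nonneg.2 (Real.rpow_le_rpow ht htr hq))

lemma powBump_eq_zero (hq : 0 ≤ q) (hr : 0 ≤ r) (hrt : r ≤ t) : powBump q r t = 0 :=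
  max_eq_right (sub_nonpos.2 (Real.rpow_le_rpow hr hrt hq))

lemma continuous_powBump (hq : 0 ≤ q) : Continuous (powBump q r) :=
  (continuous_const.sub (continuous_id.rpow_const fun _ => Or.inr hq)).max continuous_const

lemma integral_Ioi_rpow_mul_powBump {s : ℝ} (hs : 0 < s) (hq : 0 < q) (hr : 0 ≤ r) :
    ∫ t in Ioi 0, t ^ (s - 1) * powBump q r t = q / (s * (s + q)) * r ^ (s + q) := by
  have hs' : -1 < s - 1 := by linarith
  have hsq' : -1 < s + q - 1 := by linarith
  calc ∫ t in Ioi 0, t ^ (s - 1) * powBump q r t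
      = ∫ t in Ioc 0 r, t ^ (s - 1) * powBump q r t := by
        refine setIntegral_eq_of_subset_of_forall_sdiff_eq_zero measurableSet_Ioi
          Ioc_subset_Ioi_self fun t ht => ?_
        have hrt : r ≤ t := le_of_not_ge fun htr => ht.2 ⟨ht.1, htr⟩
        rw [powBump_eq_zero hq.le hr hrt, mul_zero]
    _ = ∫ t in 0..r, (r ^ q * t ^ (s - 1) - t ^ (s + q - 1)) := by
        rw [intervalIntegral.integral_of_le hr]
        refine setIntegral_congr_fun measurableSet_Ioc fun t ht => ?_
        simp only [powBump_eq_sub hq.le ht.1.le ht.2, add_sub_right_comm s q 1,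
          Real.rpow_add ht.1]
        ring
    _ = r ^ q * (r ^ s / s) - r ^ (s + q) / (s + q) := by
        rw [intervalIntegral.integral_sub
          ((intervalIntegral.intervalIntegrable_rpow' hs').const_mul _)
          (intervalIntegral.intervalIntegrable_rpow' hsq'), intervalIntegral.integral_const_mul,
          integral_rpow (Or.inl hs'), integral_rpow (Or.inl hsq')]
        simp only [sub_add_cancel, Real.zero_rpow hs.ne', Real.zero_rpow (add_pos hs hq).ne',
          sub_zero]
    _ = q / (s * (s + q)) * r ^ (s + q) := by
        rw [Real.rpow_add_of_nonneg hr hs.le hq.le]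
        field_simp
        ring

end PowBump

section Cond

variable {Ω : Type*} [MeasurableSpace Ω] {μ : Measure Ω} {X : Set Ω} {f : Ω → ℝ}

lemma integral_cond_eq_inv_mul_setIntegral : ∫ x, f x ∂μ[|X] = (μ.real X)⁻¹ * ∫ x in X, f x ∂μ := by
  rw [ProbabilityTheory.cond, integral_smul_measure, ENNReal.toReal_inv, smul_eq_mul,
    measureReal_def]

lemma integrable_cond_of_integrableOn (hX : μ X ≠ 0) (hf : IntegrableOn f X μ) :
    Integrable f μ[|X] :=
  hf.smul_measure (ENNReal.inv_ne_top.2 hX)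

end Cond

section BumpIntegrable

variable {E : Type*} [NormedAddCommGroup E] [ProperSpace E] [MeasurableSpace E] [BorelSpace E]
  {μ : Measure E} [IsFiniteMeasureOnCompacts μ] {X : Set E} {q r : ℝ}

lemma integrable_powBump_norm_sub (hq : 0 ≤ q) (hr : 0 ≤ r) (c : E) :
    Integrable (fun x => powBump q r ‖x - c‖) μ := by
  refine ((continuous_powBump hq).comp (by fun_prop)).integrable_of_hasCompactSupport
    (HasCompactSupport.intro (isCompact_closedBall c r) fun x hx => ?_)
  rw [mem_closedBall, dist_eq_norm, not_le] at hx
  exact powBump_eq_zero hq hr hx.le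

lemma integrable_cond_powBump_norm_sub (hX : μ X ≠ 0) (hq : 0 ≤ q) (hr : 0 ≤ r) (c : E) :
    Integrable (fun x => powBump q r ‖x - c‖) μ[|X] :=
  integrable_cond_of_integrableOn hX (integrable_powBump_norm_sub hq hr c).integrableOn

lemma integral_cond_sub_sum_powBump {ι : Type*} [Fintype ι] (hX₀ : μ X ≠ 0) (hX : μ X ≠ ⊤)
    (hq : 0 ≤ q) (hr : 0 ≤ r) (xs : ι → E) :
    ∫ x, (r ^ q - ∑ i, powBump q r ‖x - xs i‖) ∂μ[|X] =
      r ^ q - ∑ i, ∫ x, powBump q r ‖x - xs i‖ ∂μ[|X] := by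
  have hprob : IsProbabilityMeasure μ[|X] := cond_isProbabilityMeasure_of_finite hX₀ hX
  have hint : ∀ i, Integrable (fun x => powBump q r ‖x - xs i‖) μ[|X] := fun i =>
    integrable_cond_powBump_norm_sub hX₀ hq hr (xs i)
  rw [integral_sub (integrable_const _) (integrable_finsetSum _ fun i _ => hint i),
    integral_finsetSum _ fun i _ => hint i, integral_const, probReal_univ, one_smul]

end BumpIntegrable

section BumpIntegral

variable {E : Type*} [NormedAddCommGroup E] [NormedSpace ℝ E] [FiniteDimensional ℝ E] [Nontrivial E]
  [MeasurableSpace E] [BorelSpace E] {q r : ℝ}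

variable (μ : Measure E) [μ.IsAddHaarMeasure]

lemma integral_powBump_norm_sub (hq : 0 < q) (hr : 0 ≤ r) (c : E) :
    ∫ x, powBump q r ‖x - c‖ ∂μ = q / (finrank ℝ E + q) * r ^ q * μ.real (ball 0 r) := by
  have hn : 0 < finrank ℝ E := finrank_pos
  have hn' : (0 : ℝ) < finrank ℝ E := mod_cast hn
  have hball : μ.real (ball 0 r) = r ^ finrank ℝ E * μ.real (ball 0 1) := by
    rw [← Measure.addHaar_real_closedBall_eq_addHaar_real_ball,
      Measure.addHaar_real_closedBall μ 0 hr]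
  have hradial : ∫ t in Ioi (0 : ℝ), t ^ (finrank ℝ E - 1) • powBump q r t
      = q / (finrank ℝ E * (finrank ℝ E + q)) * (r ^ finrank ℝ E * r ^ q) := by
    rw [← Real.rpow_natCast r, ← Real.rpow_add_of_nonneg hr hn'.le hq.le,
      ← integral_Ioi_rpow_mul_powBump hn' hq hr]
    refine integral_congr_ae (ae_of_all _ fun t => ?_)
    simp only [smul_eq_mul, ← Nat.cast_pred hn, Real.rpow_natCast]
  rw [integral_sub_right_eq_self (fun x => powBump q r ‖x‖) c, integral_fun_norm_addHaar μ, hradial,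
    hball, smul_eq_mul, nsmul_eq_mul]
  field_simp

variable {μ} {X : Set E}

lemma integral_cond_powBump_norm_sub_le (hq : 0 < q) (hr : 0 ≤ r) (c : E) :
    ∫ x, powBump q r ‖x - c‖ ∂μ[|X] ≤
      (μ.real X)⁻¹ * (q / (finrank ℝ E + q) * r ^ q * μ.real (ball 0 r)) := by
  rw [integral_cond_eq_inv_mul_setIntegral, ← integral_powBump_norm_sub μ hq hr c]
  exact mul_le_mul_of_nonneg_left (setIntegral_le_integral
    (integrable_powBump_norm_sub hq.le hr c) (ae_of_all _ fun _ => powBump_nonneg))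
    (inv_nonneg.2 measureReal_nonneg)

lemma integral_cond_powBump_norm_sub_of_ball_subset (hq : 0 < q) (hr : 0 ≤ r) {c : E}
    (hc : ball c r ⊆ X) :
    ∫ x, powBump q r ‖x - c‖ ∂μ[|X] =
      (μ.real X)⁻¹ * (q / (finrank ℝ E + q) * r ^ q * μ.real (ball 0 r)) := by
  have hzero : ∀ x ∉ X, powBump q r ‖x - c‖ = 0 := fun x hx => by
    have hxc : x ∉ ball c r := fun h => hx (hc h)
    rw [mem_ball, dist_eq_norm, not_lt] at hxc
    exact powBump_eq_zero hq.le hr hxc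
  rw [integral_cond_eq_inv_mul_setIntegral, setIntegral_eq_integral_of_forall_compl_eq_zero hzero,
    integral_powBump_norm_sub μ hq hr c]

end BumpIntegral

section Pointwise

variable {E ι : Type*} [Nonempty ι] {q r : ℝ}

lemma exists_infDist_range_eq_dist [Finite ι] [PseudoMetricSpace E] (xs : ι → E) (x : E) :
    ∃ k, infDist x (range xs) = dist x (xs k) := by
  obtain ⟨_, ⟨k, rfl⟩, hk⟩ :=
    (finite_range xs).isCompact.exists_infDist_eq_dist (range_nonempty xs) x
  exact ⟨k, hk⟩

lemma iInf_norm_sub_rpow_rpow [Finite ι] [SeminormedAddCommGroup E] {α : ℝ} (hα : 0 ≤ α) (p : ℝ)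
    (xs : ι → E) (x : E) : (⨅ i, ‖x - xs i‖ ^ α) ^ p = infDist x (range xs) ^ (α * p) := by
  obtain ⟨k, hk⟩ := exists_infDist_range_eq_dist xs x
  have hmin : ∀ i, ‖x - xs k‖ ^ α ≤ ‖x - xs i‖ ^ α := fun i => by
    simp only [← dist_eq_norm]
    exact Real.rpow_le_rpow dist_nonneg (hk ▸ infDist_le_dist_of_mem (mem_range_self i)) hα
  have hiInf : ⨅ i, ‖x - xs i‖ ^ α = ‖x - xs k‖ ^ α :=
    le_antisymm (ciInf_le (finite_range _).bddBelow k) (le_ciInf hmin)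
  rw [hiInf, hk, dist_eq_norm, Real.rpow_mul (norm_nonneg _)]

lemma sub_sum_powBump_le_infDist_rpow [Fintype ι] [SeminormedAddCommGroup E] (xs : ι → E) (x : E) :
    r ^ q - ∑ i, powBump q r ‖x - xs i‖ ≤ infDist x (range xs) ^ q := by
  obtain ⟨k, hk⟩ := exists_infDist_range_eq_dist xs x
  have hterm : r ^ q - ‖x - xs k‖ ^ q ≤ powBump q r ‖x - xs k‖ := le_max_left _ _
  have hsum : powBump q r ‖x - xs k‖ ≤ ∑ i, powBump q r ‖x - xs i‖ :=
    Finset.single_le_sum (f := fun i => powBump q r ‖x - xs i‖) (fun _ _ => powBump_nonneg)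
      (Finset.mem_univ k)
  rw [hk, dist_eq_norm]
  linarith

end Pointwise

/-- The balls of radius `r` about the points `c i` tile `X`: the open balls are disjoint and lie
in `X`, and the closed balls cover `X`. -/
structure IsBallTiling {E ι : Type*} [PseudoMetricSpace E] (c : ι → E) (r : ℝ) (X : Set E) :
    Prop where
  pairwise_disjoint : Pairwise (Disjoint on fun i => ball (c i) r)
  ball_subset : ∀ i, ball (c i) r ⊆ X
  subset_iUnion : X ⊆ ⋃ i, closedBall (c i) r

namespace IsBallTiling

lemma pi {κ : Type*} [Fintype κ] {E ι : κ → Type*} [∀ k, PseudoMetricSpace (E k)]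
    {c : ∀ k, ι k → E k} {r : ℝ} {X : ∀ k, Set (E k)} (hr : 0 < r)
    (h : ∀ k, IsBallTiling (c k) r (X k)) :
    IsBallTiling (fun (j : ∀ k, ι k) k => c k (j k)) r (univ.pi X) where
  pairwise_disjoint i j hij := by
    obtain ⟨k, hk⟩ := Function.ne_iff.1 hij
    simp only [Function.onFun, ball_pi _ hr]
    exact disjoint_univ_pi.2 ⟨k, (h k).pairwise_disjoint hk⟩
  ball_subset j := by
    rw [ball_pi _ hr]
    exact pi_mono fun k _ => (h k).ball_subset (j k)
  subset_iUnion := by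
    simp only [closedBall_pi _ hr.le]
    rw [iUnion_univ_pi fun k i => closedBall (c k i) r]
    exact pi_mono fun k _ => (h k).subset_iUnion

variable {E ι : Type*} [Fintype ι] {c : ι → E} {r q : ℝ} {X : Set E}

lemma infDist_rpow_eq_sub_sum_powBump [SeminormedAddCommGroup E] (h : IsBallTiling c r X)
    (hq : 0 ≤ q) (hr : 0 ≤ r) {x : E} (hx : x ∈ X) :
    infDist x (range c) ^ q = r ^ q - ∑ i, powBump q r ‖x - c i‖ := by
  obtain ⟨j, hj⟩ := mem_iUnion.1 (h.subset_iUnion hx)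
  have : Nonempty ι := ⟨j⟩
  obtain ⟨k, hk⟩ := exists_infDist_range_eq_dist c x
  have hmin : ∀ i, dist x (c k) ≤ dist x (c i) := fun i =>
    hk ▸ infDist_le_dist_of_mem (mem_range_self i)
  have hkr : dist x (c k) ≤ r := (hmin j).trans hj
  have hfar : ∀ i ≠ k, powBump q r ‖x - c i‖ = 0 := fun i hik => by
    refine powBump_eq_zero hq hr (dist_eq_norm x (c i) ▸ le_of_not_gt fun hi => ?_)
    exact disjoint_left.1 (h.pairwise_disjoint hik) hi ((hmin i).trans_lt hi)
  rw [Fintype.sum_eq_single k hfar, powBump_eq_sub hq (norm_nonneg _) (dist_eq_norm x (c k) ▸ hkr),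
    sub_sub_cancel, hk, dist_eq_norm]

lemma measure_eq_card_mul [NormedAddCommGroup E] [NormedSpace ℝ E] [FiniteDimensional ℝ E]
    [Nontrivial E] [MeasurableSpace E] [BorelSpace E] (h : IsBallTiling c r X) (μ : Measure E)
    [μ.IsAddHaarMeasure] : μ X = Fintype.card ι * μ (ball 0 r) := by
  apply le_antisymm
  · calc μ X ≤ μ (⋃ i, closedBall (c i) r) := measure_mono h.subset_iUnion
      _ ≤ ∑ i, μ (closedBall (c i) r) := measure_iUnion_fintype_le μ _
      _ = Fintype.card ι * μ (ball 0 r) := by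
        simp only [Measure.addHaar_closedBall_eq_addHaar_ball, Measure.addHaar_ball_center,
          Finset.sum_const, Finset.card_univ, nsmul_eq_mul]
  · calc
      Fintype.card ι * μ (ball 0 r) = ∑ i, μ (ball (c i) r) := by
        simp only [Measure.addHaar_ball_center, Finset.sum_const, Finset.card_univ, nsmul_eq_mul]
      _ = μ (⋃ i, ball (c i) r) := by
        rw [measure_iUnion h.pairwise_disjoint fun _ => measurableSet_ball, tsum_fintype]
      _ ≤ μ X := measure_mono (iUnion_subset h.ball_subset)

end IsBallTiling

section MeanDistance

lemma mul_rpow_mul_rpow_one_div {c r α p : ℝ} (hc : 0 ≤ c) (hr : 0 ≤ r) (hp : p ≠ 0) :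
    (c * r ^ (α * p)) ^ (1 / p) = c ^ (1 / p) * r ^ α := by
  rw [Real.mul_rpow hc (Real.rpow_nonneg hr _), ← Real.rpow_mul hr, mul_assoc,
    mul_one_div_cancel hp, mul_one]

variable {E ι : Type*} [Nonempty ι] [NormedAddCommGroup E] [NormedSpace ℝ E]
  [FiniteDimensional ℝ E] [Nontrivial E] [MeasurableSpace E] [BorelSpace E] {μ : Measure E}
  [μ.IsAddHaarMeasure] {q r : ℝ} {X : Set E}

lemma mul_rpow_le_integral_cond_infDist_rpow [Fintype ι] (hX : IsCompact X) (hX₀ : μ X ≠ 0)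
    (hq : 0 < q) (hr : 0 ≤ r) (hvol : Fintype.card ι * μ.real (ball 0 r) ≤ μ.real X) (xs : ι → E) :
    finrank ℝ E / (finrank ℝ E + q) * r ^ q ≤ ∫ x, infDist x (range xs) ^ q ∂μ[|X] := by
  have hXpos : 0 < μ.real X := ENNReal.toReal_pos hX₀ hX.measure_ne_top
  have hcont : Continuous fun x : E => infDist x (range xs) ^ q :=
    (continuous_infDist_pt _).rpow_const fun _ => Or.inr hq.le
  calc finrank ℝ E / (finrank ℝ E + q) * r ^ q
      = r ^ q - (μ.real X)⁻¹ * (q / (finrank ℝ E + q) * r ^ q * μ.real X) := by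
        field_simp
        ring
    _ ≤ r ^ q - (μ.real X)⁻¹ *
          (q / (finrank ℝ E + q) * r ^ q * (Fintype.card ι * μ.real (ball 0 r))) := by
        gcongr
    _ = r ^ q - ∑ _i : ι, (μ.real X)⁻¹ * (q / (finrank ℝ E + q) * r ^ q * μ.real (ball 0 r)) := by
        rw [Finset.sum_const, Finset.card_univ, nsmul_eq_mul]
        ring
    _ ≤ r ^ q - ∑ i, ∫ x, powBump q r ‖x - xs i‖ ∂μ[|X] :=
        sub_le_sub_left (Finset.sum_le_sum fun i _ =>
          integral_cond_powBump_norm_sub_le hq hr (xs i)) _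
    _ = ∫ x, (r ^ q - ∑ i, powBump q r ‖x - xs i‖) ∂μ[|X] :=
        (integral_cond_sub_sum_powBump hX₀ hX.measure_ne_top hq.le hr xs).symm
    _ ≤ ∫ x, infDist x (range xs) ^ q ∂μ[|X] :=
        integral_mono
          ((integrable_const _).sub (integrable_finsetSum _ fun i _ =>
            integrable_cond_powBump_norm_sub hX₀ hq.le hr (xs i)))
          (integrable_cond_of_integrableOn hX₀ (hcont.continuousOn.integrableOn_compact hX))
          (sub_sum_powBump_le_infDist_rpow xs)

lemma IsBallTiling.integral_cond_infDist_rpow [Finite ι] {c : ι → E} (h : IsBallTiling c r X)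
    (hX : MeasurableSet X) (hq : 0 < q) (hr : 0 < r) :
    ∫ x, infDist x (range c) ^ q ∂μ[|X] = finrank ℝ E / (finrank ℝ E + q) * r ^ q := by
  have := Fintype.ofFinite ι
  have hball : 0 < μ.real (ball 0 r) :=
    ENNReal.toReal_pos (measure_ball_pos μ 0 hr).ne' measure_ball_lt_top.ne
  have hvol : μ.real X = Fintype.card ι * μ.real (ball 0 r) := by
    rw [measureReal_def, h.measure_eq_card_mul μ, ENNReal.toReal_mul, ENNReal.toReal_natCast,
      measureReal_def]
  have hcard : (0 : ℝ) < Fintype.card ι := mod_cast Fintype.card_pos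
  have hXpos : 0 < μ.real X := hvol ▸ mul_pos hcard hball
  obtain ⟨hX₀, hX_top⟩ := ENNReal.toReal_pos_iff.1 hXpos
  calc ∫ x, infDist x (range c) ^ q ∂μ[|X]
      = ∫ x, (r ^ q - ∑ i, powBump q r ‖x - c i‖) ∂μ[|X] :=
        integral_congr_ae (ae_cond_of_forall_mem hX fun _ hx =>
          h.infDist_rpow_eq_sub_sum_powBump hq.le hr.le hx)
    _ = r ^ q - ∑ i, ∫ x, powBump q r ‖x - c i‖ ∂μ[|X] :=
        integral_cond_sub_sum_powBump hX₀.ne' hX_top.ne hq.le hr.le c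
    _ = r ^ q - Fintype.card ι *
          ((μ.real X)⁻¹ * (q / (finrank ℝ E + q) * r ^ q * μ.real (ball 0 r))) := by
        simp only [integral_cond_powBump_norm_sub_of_ball_subset hq hr.le (h.ball_subset _),
          Finset.sum_const, Finset.card_univ, nsmul_eq_mul]
    _ = finrank ℝ E / (finrank ℝ E + q) * r ^ q := by
        rw [hvol]
        field_simp
        ring

lemma rpow_mul_rpow_le_rpow_integral_cond_iInf_norm_sub [Fintype ι] {α p : ℝ} (hα : 0 < α)
    (hp : 0 < p) (xs : ι → E) :
    (finrank ℝ E / (finrank ℝ E + α * p)) ^ (1 / p) *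
        (Fintype.card ι : ℝ) ^ (-(α / finrank ℝ E)) ≤
      (∫ x, (⨅ i, ‖x - xs i‖ ^ α) ^ p ∂μ[|closedBall 0 1]) ^ (1 / p) := by
  have hn : (0 : ℝ) < finrank ℝ E := mod_cast finrank_pos
  have hcard : (0 : ℝ) < Fintype.card ι := mod_cast Fintype.card_pos
  set r : ℝ := (Fintype.card ι : ℝ) ^ (-(1 / finrank ℝ E : ℝ)) with hr_def
  have hr : 0 ≤ r := by positivity
  have hr_pow : r ^ finrank ℝ E = (Fintype.card ι : ℝ)⁻¹ := by
    rw [hr_def, ← Real.rpow_natCast, ← Real.rpow_mul hcard.le, neg_mul, one_div_mul_cancel hn.ne',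
      Real.rpow_neg_one]
  have hvol : Fintype.card ι * μ.real (ball 0 r) = μ.real (closedBall 0 1) := by
    rw [← Measure.addHaar_real_closedBall_eq_addHaar_real_ball,
      Measure.addHaar_real_closedBall' μ 0 hr, hr_pow, mul_inv_cancel_left₀ hcard.ne']
  have hmean := mul_rpow_le_integral_cond_infDist_rpow (isCompact_closedBall 0 1)
    (measure_closedBall_pos μ 0 one_pos).ne' (mul_pos hα hp) hr hvol.le xs
  simp only [iInf_norm_sub_rpow_rpow hα.le]
  calc (finrank ℝ E / (finrank ℝ E + α * p)) ^ (1 / p) *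
        (Fintype.card ι : ℝ) ^ (-(α / finrank ℝ E))
      = (finrank ℝ E / (finrank ℝ E + α * p)) ^ (1 / p) * r ^ α := by
        rw [hr_def, ← Real.rpow_mul hcard.le, neg_mul, one_div_mul_eq_div]
    _ = (finrank ℝ E / (finrank ℝ E + α * p) * r ^ (α * p)) ^ (1 / p) :=
        (mul_rpow_mul_rpow_one_div (by positivity) hr hp.ne').symm
    _ ≤ (∫ x, infDist x (range xs) ^ (α * p) ∂μ[|closedBall 0 1]) ^ (1 / p) :=
        Real.rpow_le_rpow (by positivity) hmean (by positivity)

end MeanDistance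

section Cube

lemma Icc_neg_one_one_eq_closedBall (κ : Type*) [Fintype κ] :
    Icc (fun _ : κ => (-1 : ℝ)) (fun _ => 1) = closedBall 0 1 := by
  simp only [← pi_univ_Icc, closedBall_pi _ zero_le_one, Pi.zero_apply, Real.closedBall_zero_eq_Icc]

/-- The centers of the `N` intervals of length `2 / N` partitioning `[-1, 1]`, indexed from left to
right. -/
noncomputable def gridCenter (N : ℕ) (j : Fin N) : ℝ := (2 * ((j : ℕ) : ℝ) + 1) / N - 1

lemma isBallTiling_gridCenter {N : ℕ} (hN : 0 < N) :
    IsBallTiling (gridCenter N) (1 / N) (Icc (-1) 1) := by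
  let edge (j : ℕ) : ℝ := 2 * j / N - 1
  have edge_mono : Monotone edge := fun i j hij => by
    simp only [edge]
    gcongr
  have edge_zero : edge 0 = -1 := by simp [edge]
  have edge_last : edge N = 1 := by
    have hN' : (N : ℝ) ≠ 0 := mod_cast hN.ne'
    simp only [edge]
    rw [mul_div_cancel_right₀ _ hN']
    norm_num
  have left_edge (j : Fin N) : gridCenter N j - 1 / N = edge j := by
    simp only [gridCenter, edge]
    ring
  have right_edge (j : Fin N) : gridCenter N j + 1 / N = edge (j + 1) := by
    simp only [gridCenter, edge]
    push_cast
    ring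
  refine ⟨?_, fun j => ?_, ?_⟩
  · simp only [Real.ball_eq_Ioo, left_edge, right_edge]
    exact edge_mono.pairwise_disjoint_on_Ioo_succ.comp_of_injective Fin.val_injective
  · rw [Real.ball_eq_Ioo, left_edge, right_edge, ← edge_zero, ← edge_last]
    exact Ioo_subset_Icc_self.trans (Icc_subset_Icc (edge_mono (Nat.zero_le _)) (edge_mono j.2))
  · have hclosure : Icc (-1) 1 = closure (⋃ j ∈ Ico 0 N, Ioc (edge j) (edge (Order.succ j))) := by
      rw [edge_mono.biUnion_Ico_Ioc_map_succ, edge_zero, edge_last, closure_Ioc (by norm_num)]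
    rw [hclosure]
    refine closure_minimal (iUnion₂_subset fun j hj => ?_)
      (isClosed_iUnion_of_finite fun _ => isClosed_closedBall)
    refine Subset.trans ?_ (subset_iUnion _ (⟨j, (mem_Ico.1 hj).2⟩ : Fin N))
    rw [Real.closedBall_eq_Icc, left_edge, right_edge]
    exact Ioc_subset_Icc_self

lemma isBallTiling_cubicalGrid (κ : Type*) [Fintype κ] {N : ℕ} (hN : 0 < N) :
    IsBallTiling (fun (j : κ → Fin N) k => gridCenter N (j k)) (1 / N) (closedBall 0 1) := by
  rw [← Icc_neg_one_one_eq_closedBall, ← pi_univ_Icc]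
  exact IsBallTiling.pi (by positivity) fun _ => isBallTiling_gridCenter hN

lemma rpow_integral_cond_iInf_norm_sub_of_range_eq_cubicalGrid {κ ι : Type*} [Fintype κ]
    [Nonempty κ] [Finite ι] [Nonempty ι] {α p : ℝ} (hα : 0 < α) (hp : 0 < p) {N : ℕ} (hN : 0 < N)
    {xs : ι → κ → ℝ} (hxs : range xs = range fun (j : κ → Fin N) k => gridCenter N (j k)) :
    (∫ x, (⨅ i, ‖x - xs i‖ ^ α) ^ p ∂volume[|closedBall 0 1]) ^ (1 / p) =
      (Fintype.card κ / (Fintype.card κ + α * p)) ^ (1 / p) *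
        (N ^ Fintype.card κ : ℝ) ^ (-(α / Fintype.card κ)) := by
  classical
  have : NeZero N := ⟨hN.ne'⟩
  have hcard : (Fintype.card κ : ℝ) ≠ 0 := mod_cast Fintype.card_ne_zero
  have hside : (1 / N : ℝ) ^ α = (N ^ Fintype.card κ : ℝ) ^ (-(α / Fintype.card κ)) := by
    rw [← Real.rpow_natCast, ← Real.rpow_mul N.cast_nonneg, mul_neg, mul_div_cancel₀ _ hcard,
      Real.rpow_neg N.cast_nonneg, one_div, Real.inv_rpow N.cast_nonneg]
  simp only [iInf_norm_sub_rpow_rpow hα.le, hxs]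
  rw [(isBallTiling_cubicalGrid κ hN).integral_cond_infDist_rpow measurableSet_closedBall
    (mul_pos hα hp) (by positivity), finrank_fintype_fun_eq_card,
    mul_rpow_mul_rpow_one_div (by positivity) (by positivity) hp.ne', hside]

end Cube

theorem stmt19_general (d : ℕ) (hd : 0 < d) (α : ℝ) (hα : 0 < α) (p : ℝ) (hp : 0 < p) :
    (∀ (M : ℕ), 0 < M → ∀ xs : Fin M → (Fin d → ℝ),
      ((d : ℝ) / (d + α * p)) ^ (1 / p) * (M : ℝ) ^ (-(α / d)) ≤
        (∫ x, (⨅ m, ‖x - xs m‖ ^ α) ^ p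
          ∂volume[|Icc (fun _ => (-1 : ℝ)) (fun _ => (1 : ℝ))]) ^ (1 / p)) ∧
    (∀ (N : ℕ), 0 < N → ∀ xs : Fin (N ^ d) → (Fin d → ℝ),
      (∃ e : Fin (N ^ d) ≃ (Fin d → Fin N), ∀ m, xs m = fun i => gridCenter N (e m i)) →
      (∫ x, (⨅ m, ‖x - xs m‖ ^ α) ^ p
          ∂volume[|Icc (fun _ => (-1 : ℝ)) (fun _ => (1 : ℝ))]) ^ (1 / p) =
        ((d : ℝ) / (d + α * p)) ^ (1 / p) * ((N ^ d : ℕ) : ℝ) ^ (-(α / d))) := by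
  have : Nonempty (Fin d) := ⟨⟨0, hd⟩⟩
  rw [Icc_neg_one_one_eq_closedBall]
  refine ⟨fun M hM xs => ?_, fun N hN xs ⟨e, hxs⟩ => ?_⟩
  · have : Nonempty (Fin M) := ⟨⟨0, hM⟩⟩
    simpa only [finrank_fintype_fun_eq_card, Fintype.card_fin] using
      rpow_mul_rpow_le_rpow_integral_cond_iInf_norm_sub hα hp xs
  · have : Nonempty (Fin (N ^ d)) := ⟨⟨0, Nat.pow_pos hN⟩⟩
    have hrange : range xs = range fun (j : Fin d → Fin N) i => gridCenter N (j i) := by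
      rw [funext hxs]
      exact e.surjective.range_comp fun (j : Fin d → Fin N) i => gridCenter N (j i)
    simpa only [Nat.cast_pow, Fintype.card_fin] using
      rpow_integral_cond_iInf_norm_sub_of_range_eq_cubicalGrid hα hp hN hrange

/-- For `X = [-1,1]^d` with the `ℓ∞`-norm and normalized Lebesgue measure, and
`ε = 0`: for any datasites, `‖U‖_{L_p} ≥ (d/(d+αp))^(1/p) M^(-α/d)` where
`U(x) = min_m ‖x - x⁽ᵐ⁾‖_∞^α`, and when `M = N^d` equality holds for the centers of the `N^d`
congruent subcubes of side `2/N` partitioning `[-1,1]^d`. -/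
theorem stmt19 (d : ℕ) (hd : 0 < d)
    (α : ℝ) (hα : 0 < α) (hα1 : α ≤ 1) (p : ℝ) (hp : 1 ≤ p) :
    (∀ (M : ℕ), 0 < M → ∀ xs : Fin M → (Fin d → ℝ),
      (∀ m, xs m ∈ Set.Icc (fun _ => (-1 : ℝ)) (fun _ => (1 : ℝ))) →
      ((d : ℝ) / ((d : ℝ) + α * p)) ^ (1 / p) * (M : ℝ) ^ (-(α / (d : ℝ))) ≤
        (∫ x, (⨅ m : Fin M, ‖x - xs m‖ ^ α) ^ p
          ∂((volume (Set.Icc (fun _ => (-1 : ℝ)) (fun _ => (1 : ℝ)) : Set (Fin d → ℝ)))⁻¹ •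
            volume.restrict (Set.Icc (fun _ => (-1 : ℝ)) (fun _ => (1 : ℝ))))) ^ (1 / p)) ∧
    (∀ (N : ℕ), 0 < N → ∀ xs : Fin (N ^ d) → (Fin d → ℝ),
      (∃ e : Fin (N ^ d) ≃ (Fin d → Fin N),
        ∀ m, xs m = fun i => (2 * ((e m i : ℕ) : ℝ) + 1) / (N : ℝ) - 1) →
      (∫ x, (⨅ m : Fin (N ^ d), ‖x - xs m‖ ^ α) ^ p
          ∂((volume (Set.Icc (fun _ => (-1 : ℝ)) (fun _ => (1 : ℝ)) : Set (Fin d → ℝ)))⁻¹ •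
            volume.restrict (Set.Icc (fun _ => (-1 : ℝ)) (fun _ => (1 : ℝ))))) ^ (1 / p) =
        ((d : ℝ) / ((d : ℝ) + α * p)) ^ (1 / p) * ((N ^ d : ℕ) : ℝ) ^ (-(α / (d : ℝ)))) :=
  ⟨fun M hM xs _ => (stmt19_general d hd α hα p (one_pos.trans_le hp)).1 M hM xs,
    (stmt19_general d hd α hα p (one_pos.trans_le hp)).2⟩
end
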